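/- Let N, L be positive integers, α_L, α_A ∈ ℝ, H₀ ∈ ℝ, and let k, q ∈ ℝ^N. Set c = 1/(L^{1-α_L} N^{1-α_A}), δk = c H₀ q and δq = c H₀ k, and define the pre-attention variable A = (1/N^{α_A}) (k·q). Then the exact identity holds: (1/N^{α_A}) ((k+δk)·(q+δq)) − A = (H₀/(L^{1-α_L} N)) (‖k‖² + ‖q‖²) + (H₀²/(L^{2-2α_L} N^{2-2α_A})) A. Consequently, if ‖k‖² and ‖q‖² are of order N and H₀, A are of order 1, the update to the pre-attention variable is of order L^{-1+α_L} for every α_A, and is of order 1 in N. -/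

import Mathlib

open Matrix Finset

/-!
Expanding `(k + cH₀q)·(q + cH₀k)` bilinearly gives
`k·q + cH₀(‖k‖² + ‖q‖²) + (cH₀)² k·q`. Multiplying by `N^{-αA}` and subtracting `A`, the powers of
`N` in the linear term combine as `N^αA * N^(1 - αA) = N`, while `(cH₀)²` is the coefficient of `A`.
-/

/-- Exact identity for the one-step change of the pre-attention variable
`A = N^{-α_A} k·q` under the key/query updates `δk = c H₀ q`, `δq = c H₀ k`
with `c = 1/(L^{1-α_L} N^{1-α_A})`. -/
theorem pre_attention_update_identity
    (N L : ℕ) (hN : 0 < N) (hL : 0 < L) (αL αA : ℝ) (H₀ : ℝ)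
    (k q : Fin N → ℝ)
    (c A : ℝ) (δk δq : Fin N → ℝ)
    (hc : c = 1 / ((L : ℝ) ^ ((1 : ℝ) - αL) * (N : ℝ) ^ ((1 : ℝ) - αA)))
    (hδk : δk = (c * H₀) • q) (hδq : δq = (c * H₀) • k)
    (hA : A = (1 / (N : ℝ) ^ αA) * (k ⬝ᵥ q)) :
    (1 / (N : ℝ) ^ αA) * ((k + δk) ⬝ᵥ (q + δq)) - A =
      (H₀ / ((L : ℝ) ^ ((1 : ℝ) - αL) * N)) * (k ⬝ᵥ k + q ⬝ᵥ q) +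
        (H₀ ^ 2 / ((L : ℝ) ^ ((2 : ℝ) - 2 * αL) * (N : ℝ) ^ ((2 : ℝ) - 2 * αA))) * A := by
  have hN' : (0 : ℝ) < N := by exact_mod_cast hN
  have hL' : (0 : ℝ) < L := by exact_mod_cast hL
  have e1 : (L : ℝ) ^ ((2 : ℝ) - 2 * αL) = ((L : ℝ) ^ ((1 : ℝ) - αL)) ^ 2 := by
    rw [← Real.rpow_mul_natCast hL'.le]; congr 1; push_cast; ring
  have e2 : (N : ℝ) ^ ((2 : ℝ) - 2 * αA) = ((N : ℝ) ^ ((1 : ℝ) - αA)) ^ 2 := by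
    rw [← Real.rpow_mul_natCast hN'.le]; congr 1; push_cast; ring
  -- The prefactor of the linear term is `N⁻¹` whatever `αA` is.
  have e3 : (N : ℝ) = (N : ℝ) ^ αA * (N : ℝ) ^ ((1 : ℝ) - αA) := by
    rw [← Real.rpow_add hN']; simp
  have e4 : H₀ / ((L : ℝ) ^ ((1 : ℝ) - αL) * N) = (1 / (N : ℝ) ^ αA) * (c * H₀) := by
    have hα := (Real.rpow_pos_of_pos hN' αA).ne'
    have hβ := (Real.rpow_pos_of_pos hN' (1 - αA)).ne'
    have hγ := (Real.rpow_pos_of_pos hL' (1 - αL)).ne'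
    calc H₀ / ((L : ℝ) ^ ((1 : ℝ) - αL) * N)
        = H₀ / ((L : ℝ) ^ ((1 : ℝ) - αL) *
            ((N : ℝ) ^ αA * (N : ℝ) ^ ((1 : ℝ) - αA))) := by rw [← e3]
      _ = _ := by rw [hc]; field_simp
  have e5 : H₀ ^ 2 / ((L : ℝ) ^ ((2 : ℝ) - 2 * αL) * (N : ℝ) ^ ((2 : ℝ) - 2 * αA)) =
      (c * H₀) ^ 2 := by
    rw [e1, e2, hc]; ring
  rw [e4, e5, hA, hδk, hδq]
  simp only [add_dotProduct, dotProduct_add, smul_dotProduct, dotProduct_smul, smul_eq_mul,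
    dotProduct_comm q k]
  ring
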